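/- Let n ≥ 1 and let γⁿ be the standard Gaussian probability measure on ℝⁿ. Then for every k ≥ 1, λ_k^Lip(ℝⁿ,|·|,γⁿ) ≥ max( (n/e)·k^{1/n} − n , (log k)/log((n+1)·e) ). -/

import Mathlib

open MeasureTheory Filter Topology ENNReal

/-- The local Lipschitz constant `|∇f|(x) = limsup_{y→x} |f(y)-f(x)|/d(y,x)`
(equal to `0` at isolated points, by the convention `Real.sInf ∅ = 0`). -/
noncomputable def localLip {Ω : Type*} [PseudoMetricSpace Ω] (f : Ω → ℝ) (x : Ω) : ℝ :=
  Filter.limsup (fun y => |f y - f x| / dist y x) (nhdsWithin x {x}ᶜ)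

/-- Membership in the metric Sobolev space `W^{1,2}_Lip(Ω,d,μ)`. -/
def memW12Lip {Ω : Type*} [PseudoMetricSpace Ω] [MeasurableSpace Ω]
    (μ : Measure Ω) (f : Ω → ℝ) : Prop :=
  LocallyLipschitz f ∧
    (∫⁻ x, ENNReal.ofReal ((f x) ^ 2) ∂μ) + (∫⁻ x, ENNReal.ofReal ((localLip f x) ^ 2) ∂μ) < ⊤

/-- The `k`-th metric eigenvalue `λ_k^Lip(Ω,d,μ)`: the infimum over `k`-dimensional
linear subspaces `F ⊆ W^{1,2}_Lip` of the supremum of the Rayleigh quotient over `F`. -/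
noncomputable def lambdaLip {Ω : Type*} [PseudoMetricSpace Ω] [MeasurableSpace Ω]
    (μ : Measure Ω) (k : ℕ) : ℝ :=
  sInf { a : ℝ | ∃ F : Submodule ℝ (Ω → ℝ), Module.finrank ℝ F = k ∧
    (∀ f ∈ F, memW12Lip μ f) ∧
    a = sSup { r : ℝ | ∃ f ∈ F, (∫ x, (f x) ^ 2 ∂μ) ≠ 0 ∧
      r = (∫ x, (localLip f x) ^ 2 ∂μ) / (∫ x, (f x) ^ 2 ∂μ) } }

/-- The standard Gaussian probability measure `γⁿ` on `ℝⁿ`, with density proportional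
to `exp(-|x|²/2)` with respect to Lebesgue measure, normalized to total mass one. -/
noncomputable def stdGaussian (n : ℕ) : Measure (EuclideanSpace ℝ (Fin n)) :=
  ((volume.withDensity fun x : EuclideanSpace ℝ (Fin n) =>
      ENNReal.ofReal (Real.exp (-‖x‖ ^ 2 / 2))) Set.univ)⁻¹ •
    volume.withDensity fun x : EuclideanSpace ℝ (Fin n) =>
      ENNReal.ofReal (Real.exp (-‖x‖ ^ 2 / 2))

/-!
The Ornstein–Uhlenbeck operator `L p = ∑ i, (xᵢ ∂ᵢ p - ∂ᵢ² p)` satisfies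
`∫ ⟪∇ f, ∇ p⟫ ∂γ = ∫ f * L p ∂γ` and acts on polynomials of degree at most `m` as multiplication
by `m` modulo lower degree. The exponential moments of `γ` expand the Fourier transform of `f γ` as
a power series in the moments of `f`, so polynomials are dense in `L²(γ)`; hence a Sobolev function
orthogonal to all polynomials of degree at most `m` has energy at least `(m + 1) ‖f‖²`. These
polynomials form a space of dimension `(n + m).choose m`, so every subspace of larger dimension
contains such a function, whence `λ_k ≥ m` for the least `m` with `k ≤ (n + m).choose m`. The two
lower bounds then come from `(n + m).choose m ≤ (e (n + m) / n) ^ n` and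
`(n + m).choose m ≤ (n + 1) ^ m`.
-/

namespace GaussianEigenvalue

open scoped Gradient RealInnerProductSpace NNReal

section LocalLipschitzConstant

lemma isBoundedUnder_ge_abs_sub_div_dist {Ω : Type*} [PseudoMetricSpace Ω] (f : Ω → ℝ) (x : Ω)
    (l : Filter Ω) : l.IsBoundedUnder (· ≥ ·) fun y => |f y - f x| / dist y x :=
  isBoundedUnder_of_eventually_ge (.of_forall fun _ => by positivity)

lemma localLip_of_subsingleton {Ω : Type*} [PseudoMetricSpace Ω] [Subsingleton Ω] (f : Ω → ℝ)
    (x : Ω) : localLip f x = 0 := by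
  have hempty : ({x}ᶜ : Set Ω) = ∅ := Set.eq_empty_of_forall_notMem fun y => by
    simp [Subsingleton.elim y x]
  simp [localLip, hempty, limsup, limsSup]

variable {E : Type*} [NormedAddCommGroup E] [NormedSpace ℝ E] {f : E → ℝ} {x : E}

lemma eventually_abs_sub_div_dist_le (hf : DifferentiableAt ℝ f x) {ε : ℝ} (hε : 0 < ε) :
    ∀ᶠ y in 𝓝[≠] x, |f y - f x| / dist y x ≤ ‖fderiv ℝ f x‖ + ε := by
  have hlittleO := (hasFDerivAt_iff_isLittleO.1 hf.hasFDerivAt).def hε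
  filter_upwards [hlittleO.filter_mono nhdsWithin_le_nhds, self_mem_nhdsWithin] with y hy hne
  rw [div_le_iff₀ (dist_pos.2 hne), dist_eq_norm]
  calc |f y - f x| = ‖f y - f x - fderiv ℝ f x (y - x) + fderiv ℝ f x (y - x)‖ := by simp
    _ ≤ ε * ‖y - x‖ + ‖fderiv ℝ f x‖ * ‖y - x‖ :=
        (norm_add_le _ _).trans (add_le_add hy ((fderiv ℝ f x).le_opNorm _))
    _ = (‖fderiv ℝ f x‖ + ε) * ‖y - x‖ := by ring

lemma localLip_le_norm_fderiv [Nontrivial E] (hf : DifferentiableAt ℝ f x) :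
    localLip f x ≤ ‖fderiv ℝ f x‖ :=
  le_of_forall_pos_le_add fun _ hε =>
    limsup_le_of_le (isBoundedUnder_ge_abs_sub_div_dist f x _).isCoboundedUnder_flip
      (eventually_abs_sub_div_dist_le hf hε)

lemma abs_fderiv_apply_le_localLip_mul_norm (hf : DifferentiableAt ℝ f x) {v : E} (hv : v ≠ 0) :
    |fderiv ℝ f x v| ≤ localLip f x * ‖v‖ := by
  have hline : Tendsto (fun t : ℝ => x + t • v) (𝓝[>] 0) (𝓝[≠] x) := by
    refine tendsto_nhdsWithin_iff.2 ⟨?_, ?_⟩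
    · have hcont : Continuous fun t : ℝ => x + t • v := by fun_prop
      simpa using (hcont.tendsto 0).mono_left nhdsWithin_le_nhds
    · filter_upwards [self_mem_nhdsWithin] with t (ht : 0 < t)
      simp [ht.ne', hv]
  have hlim : Tendsto ((fun y => |f y - f x| / dist y x) ∘ fun t : ℝ => x + t • v) (𝓝[>] 0)
      (𝓝 (|fderiv ℝ f x v| / ‖v‖)) := by
    refine ((hf.hasFDerivAt.hasLineDerivAt v).tendsto_slope_zero_right.abs.div_const ‖v‖).congr' ?_
    filter_upwards [self_mem_nhdsWithin] with t (ht : 0 < t)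
    simp only [smul_eq_mul, abs_mul, abs_inv, abs_of_pos ht, Function.comp_apply,
      dist_self_add_left, norm_smul, Real.norm_eq_abs]
    field_simp
  rw [← div_le_iff₀ (norm_pos_iff.2 hv), ← hlim.limsup_eq]
  exact hline.limsup_comp_le_limsup
    ((isBoundedUnder_ge_abs_sub_div_dist f x (𝓝[≠] x)).mono hline).isCoboundedUnder_flip
    (isBoundedUnder_of_eventually_le (eventually_abs_sub_div_dist_le hf one_pos))

lemma localLip_eq_norm_fderiv (hf : DifferentiableAt ℝ f x) :
    localLip f x = ‖fderiv ℝ f x‖ := by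
  cases subsingleton_or_nontrivial E with
  | inl _ => rw [localLip_of_subsingleton, Subsingleton.elim (fderiv ℝ f x) 0, norm_zero]
  | inr _ =>
    have hbound := fun v (hv : v ≠ 0) => abs_fderiv_apply_le_localLip_mul_norm hf hv
    obtain ⟨v, hv⟩ := exists_ne (0 : E)
    have hnonneg : 0 ≤ localLip f x :=
      nonneg_of_mul_nonneg_left ((abs_nonneg _).trans (hbound v hv)) (norm_pos_iff.2 hv)
    exact (localLip_le_norm_fderiv hf).antisymm
      (ContinuousLinearMap.opNorm_le_bound' _ hnonneg fun v hv => hbound v (norm_ne_zero_iff.1 hv))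

end LocalLipschitzConstant

section IntegrationByParts

lemma tendsto_integral_mul_of_bounded {α : Type*} [MeasurableSpace α] {μ : Measure α}
    {g : α → ℝ} (hg : Integrable g μ) {c : ℕ → α → ℝ} {c' : α → ℝ}
    (hc : ∀ k, AEStronglyMeasurable (c k) μ) {C : ℝ} (hbound : ∀ k x, |c k x| ≤ C)
    (hlim : ∀ x, Tendsto (c · x) atTop (𝓝 (c' x))) :
    Tendsto (fun k => ∫ x, g x * c k x ∂μ) atTop (𝓝 (∫ x, g x * c' x ∂μ)) := by
  refine tendsto_integral_of_dominated_convergence (fun x => C * |g x|)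
    (fun k => hg.aestronglyMeasurable.mul (hc k)) (hg.abs.const_mul C)
    (fun k => .of_forall fun x => ?_) (.of_forall fun x => (hlim x).const_mul (g x))
  rw [norm_mul, mul_comm]
  exact mul_le_mul_of_nonneg_right (hbound k x) (norm_nonneg _)

lemma tendsto_natCast_add_one_inv_smul {E : Type*} [NormedAddCommGroup E] [NormedSpace ℝ E]
    (x : E) : Tendsto (fun k : ℕ => ((k : ℝ) + 1)⁻¹ • x) atTop (𝓝 0) := by
  simpa [one_div] using
    (tendsto_one_div_add_atTop_nhds_zero_nat (𝕜 := ℝ)).smul_const x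

variable {E : Type*} [NormedAddCommGroup E] [NormedSpace ℝ E] [FiniteDimensional ℝ E]
  {f : E → ℝ}

lemma exists_lipschitzWith_eqOn_closedBall (hf : LocallyLipschitz f) (r : ℝ) :
    ∃ (K : ℝ≥0) (g : E → ℝ), LipschitzWith K g ∧ Set.EqOn f g (Metric.closedBall 0 r) := by
  obtain ⟨K, hK⟩ := (hf.locallyLipschitzOn (s := Metric.closedBall 0 r))
    |>.exists_lipschitzOnWith_of_compact (isCompact_closedBall _ _)
  exact ⟨K, hK.extend_real⟩

lemma exists_cutoff_sequence :
    ∃ (χ : ℕ → E → ℝ) (C : ℝ), (∀ k, ContDiff ℝ 1 (χ k)) ∧ (∀ k, HasCompactSupport (χ k)) ∧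
      (∀ k x, |χ k x| ≤ C) ∧ (∀ k x v, |fderiv ℝ (χ k) x v| ≤ C * ‖v‖) ∧
      (∀ x, Tendsto (χ · x) atTop (𝓝 1)) ∧
      ∀ x v, Tendsto (fun k => fderiv ℝ (χ k) x v) atTop (𝓝 0) := by
  let b : ContDiffBump (0 : E) := default
  obtain ⟨L, hL⟩ := b.contDiff.lipschitzWith_of_hasCompactSupport b.hasCompactSupport one_ne_zero
  have hscale (k : ℕ) : (0 : ℝ) < ((k : ℝ) + 1)⁻¹ := by positivity
  have hfderiv (k : ℕ) (x v : E) : fderiv ℝ (fun y => b (((k : ℝ) + 1)⁻¹ • y)) x v =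
      ((k : ℝ) + 1)⁻¹ * fderiv ℝ b (((k : ℝ) + 1)⁻¹ • x) v := by
    rw [fderiv_comp_smul]; simp
  have hLfderiv (k : ℕ) (x v : E) :
      |fderiv ℝ (fun y => b (((k : ℝ) + 1)⁻¹ • y)) x v| ≤ ((k : ℝ) + 1)⁻¹ * (L * ‖v‖) := by
    rw [hfderiv, abs_mul, abs_of_pos (hscale k)]
    exact mul_le_mul_of_nonneg_left (ContinuousLinearMap.le_of_opNorm_le _
      (norm_fderiv_le_of_lipschitz ℝ hL) v) (hscale k).le
  refine ⟨fun k x => b (((k : ℝ) + 1)⁻¹ • x), max 1 L, fun k => ?_, fun k => ?_, fun k x => ?_,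
    fun k x v => (hLfderiv k x v).trans ?_, fun x => ?_, fun x v => ?_⟩
  · exact b.contDiff.comp (contDiff_const_smul _)
  · exact b.hasCompactSupport.comp_smul (hscale k).ne'
  · exact (abs_of_nonneg b.nonneg).trans_le (b.le_one.trans (le_max_left _ _))
  · have hinv : ((k : ℝ) + 1)⁻¹ ≤ 1 := inv_le_one_of_one_le₀ (by simp)
    exact (mul_le_of_le_one_left (by positivity) hinv).trans (by gcongr; exact le_max_right _ _)
  · have hone : b =ᶠ[𝓝 0] 1 := b.eventuallyEq_one
    exact tendsto_const_nhds.congr'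
      (EventuallyEq.symm <| (tendsto_natCast_add_one_inv_smul x).eventually hone)
  · refine squeeze_zero_norm (hLfderiv · x v) ?_
    simpa using tendsto_natCast_add_one_inv_smul (L * ‖v‖)

variable [MeasurableSpace E] [BorelSpace E] {μ : Measure E} [μ.IsAddHaarMeasure]

lemma ae_differentiableAt_of_locallyLipschitz (hf : LocallyLipschitz f) :
    ∀ᵐ x ∂μ, DifferentiableAt ℝ f x := by
  choose K g hg hfg using fun k : ℕ => exists_lipschitzWith_eqOn_closedBall hf k
  filter_upwards [ae_all_iff.2 fun k => (hg k).ae_differentiableAt (μ := μ)] with x hx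
  obtain ⟨k, hk⟩ := exists_nat_gt ‖x‖
  exact (hx k).congr_of_eventuallyEq <| (hfg k).eventuallyEq_of_mem <|
    Metric.closedBall_mem_nhds_of_mem (by simpa using hk)

lemma integral_fderiv_mul_eq_neg_of_hasCompactSupport (hf : LocallyLipschitz f) {φ : E → ℝ}
    (hφ : ContDiff ℝ 1 φ) (hsupp : HasCompactSupport φ) (v : E) :
    ∫ x, fderiv ℝ f x v * φ x ∂μ = -∫ x, f x * fderiv ℝ φ x v ∂μ := by
  obtain ⟨r, hr⟩ := hsupp.isCompact.isBounded.subset_ball (0 : E)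
  obtain ⟨K, g, hg, hfg⟩ := exists_lipschitzWith_eqOn_closedBall hf r
  obtain ⟨K', hφLip⟩ := hφ.lipschitzWith_of_hasCompactSupport hsupp one_ne_zero
  have hfg_nhds {x : E} (hx : x ∈ tsupport φ) : f =ᶠ[𝓝 x] g :=
    hfg.eventuallyEq_of_mem (Metric.closedBall_mem_nhds_of_mem (hr hx))
  calc ∫ x, fderiv ℝ f x v * φ x ∂μ = ∫ x, lineDeriv ℝ g x v * φ x ∂μ := by
        refine integral_congr_ae ?_
        filter_upwards [hg.ae_differentiableAt] with x hgx
        by_cases hx : x ∈ tsupport φ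
        · rw [(hfg_nhds hx).fderiv_eq, hgx.lineDeriv_eq_fderiv]
        · simp [image_eq_zero_of_notMem_tsupport hx]
    _ = ∫ x, lineDeriv ℝ φ x (-v) * g x ∂μ := hg.integral_lineDeriv_mul_eq hφLip hsupp v
    _ = ∫ x, -(f x * fderiv ℝ φ x v) ∂μ := by
        congr with x
        rw [(hφ.differentiable one_ne_zero x).lineDeriv_eq_fderiv]
        by_cases hx : x ∈ tsupport φ
        · rw [(hfg_nhds hx).eq_of_nhds, map_neg]; ring
        · simp [image_eq_zero_of_notMem_tsupport fun h => hx (tsupport_fderiv_subset ℝ h)]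
    _ = -∫ x, f x * fderiv ℝ φ x v ∂μ := integral_neg _

lemma integral_fderiv_mul_eq_neg (hf : LocallyLipschitz f) {u : E → ℝ} (hu : ContDiff ℝ 1 u)
    {v : E} (hf'u : Integrable (fun x => fderiv ℝ f x v * u x) μ)
    (hfu' : Integrable (fun x => f x * fderiv ℝ u x v) μ)
    (hfu : Integrable (fun x => f x * u x) μ) :
    ∫ x, fderiv ℝ f x v * u x ∂μ = -∫ x, f x * fderiv ℝ u x v ∂μ := by
  obtain ⟨χ, C, hχ, hsupp, hbound, hbound', hlim, hlim'⟩ := exists_cutoff_sequence (E := E)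
  have hmeas (k : ℕ) : AEStronglyMeasurable (χ k) μ := (hχ k).continuous.aestronglyMeasurable
  have hcont' (k : ℕ) : Continuous fun x => fderiv ℝ (χ k) x v :=
    ((hχ k).continuous_fderiv one_ne_zero).clm_apply continuous_const
  have hmeas' (k : ℕ) : AEStronglyMeasurable (fun x => fderiv ℝ (χ k) x v) μ :=
    (hcont' k).aestronglyMeasurable
  have hcutoff (k : ℕ) : ∫ x, fderiv ℝ f x v * u x * χ k x ∂μ =
      -(∫ x, f x * fderiv ℝ u x v * χ k x ∂μ + ∫ x, f x * u x * fderiv ℝ (χ k) x v ∂μ) := by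
    have hibp := integral_fderiv_mul_eq_neg_of_hasCompactSupport (μ := μ) hf
      (hu.mul (hχ k)) (hsupp k).mul_left v
    rw [← integral_add (hfu'.mul_bdd (c := C) (hmeas k) (.of_forall (hbound k)))
      (hfu.mul_bdd (c := C * ‖v‖) (hmeas' k) (.of_forall (hbound' k · v)))]
    convert hibp using 2
    · ext x; simp [mul_assoc]
    · congr with x
      change _ = f x * fderiv ℝ (fun y => u y * χ k y) x v
      rw [fderiv_fun_mul (hu.differentiable one_ne_zero x) ((hχ k).differentiable one_ne_zero x)]
      simp only [add_apply, smul_apply, smul_eq_mul]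
      ring
  have hleft := tendsto_integral_mul_of_bounded hf'u hmeas hbound hlim
  have hright := ((tendsto_integral_mul_of_bounded hfu' hmeas hbound hlim).add
    (tendsto_integral_mul_of_bounded hfu hmeas' (hbound' · · v) (hlim' · v))).neg
  simp only [mul_one, mul_zero, integral_zero, add_zero] at hleft hright
  exact tendsto_nhds_unique (hleft.congr hcutoff) hright

end IntegrationByParts

section SpectralGap

variable {W H K : Type*} [AddCommGroup W] [Module ℝ W]
  [NormedAddCommGroup H] [InnerProductSpace ℝ H] [NormedAddCommGroup K] [InnerProductSpace ℝ K]

lemma norm_sq_eq_add_norm_sub_sq {x y : H} (h : ⟪x - y, y⟫ = 0) :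
    ‖x‖ ^ 2 = ‖y‖ ^ 2 + ‖x - y‖ ^ 2 := by
  have hpythagoras := norm_add_sq_real (x - y) y
  rw [sub_add_cancel, h] at hpythagoras
  linarith

/-- A filtration `V` of a subspace of the domain `W` of the quadratic form `w ↦ ‖D w‖²` on `H`
(`W` being mapped to `H` by `J`) which triangularizes the operator `L` of that form, with eigenvalue
`m` on `V m / V (m - 1)`. The operator itself is not part of the data: `q` stands for
`L p - (m + 1) p`. -/
structure IsTriangularFiltration (J : W →ₗ[ℝ] H) (D : W →ₗ[ℝ] K) (V : ℕ → Submodule ℝ W) :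
    Prop where
  monotone : Monotone V
  finiteDimensional : ∀ m, FiniteDimensional ℝ (V m)
  exists_inner_eq : ∀ m, ∀ p ∈ V (m + 1), ∃ q ∈ V m, ∀ w,
    ⟪D w, D p⟫ = ⟪J w, ((m : ℝ) + 1) • J p + J q⟫

namespace IsTriangularFiltration

variable {J : W →ₗ[ℝ] H} {D : W →ₗ[ℝ] K} {V : ℕ → Submodule ℝ W}

lemma inner_eq_of_mem_orthogonal (h : IsTriangularFiltration J D V) {m : ℕ} {p w : W}
    (hp : p ∈ V (m + 1)) (hw : J w ∈ ((V m).map J)ᗮ) :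
    ⟪D w, D p⟫ = ((m : ℝ) + 1) * ⟪J w, J p⟫ := by
  obtain ⟨q, hq, hinner⟩ := h.exists_inner_eq m p hp
  have hJq : ⟪J w, J q⟫ = 0 :=
    Submodule.inner_left_of_mem_orthogonal (Submodule.mem_map_of_mem hq) hw
  rw [hinner, inner_add_right, hJq, inner_smul_right, add_zero]

lemma exists_projection (h : IsTriangularFiltration J D V) (m : ℕ) (w : W) :
    ∃ p ∈ V m, J (w - p) ∈ ((V m).map J)ᗮ ∧
      ‖J w‖ ^ 2 = ‖J p‖ ^ 2 + ‖J (w - p)‖ ^ 2 ∧ ‖D w‖ ^ 2 = ‖D p‖ ^ 2 + ‖D (w - p)‖ ^ 2 := by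
  have := h.finiteDimensional m
  obtain ⟨p, hp, hJp⟩ := ((V m).map J).starProjection_apply_mem (J w)
  have horth : J (w - p) ∈ ((V m).map J)ᗮ := by
    rw [map_sub, hJp]
    exact Submodule.sub_starProjection_mem_orthogonal _
  have hinner : ⟪J (w - p), J p⟫ = 0 :=
    Submodule.inner_left_of_mem_orthogonal (Submodule.mem_map_of_mem hp) horth
  have hinner' : ⟪D (w - p), D p⟫ = 0 := by
    rw [h.inner_eq_of_mem_orthogonal (h.monotone m.le_succ hp) horth, hinner, mul_zero]
  rw [map_sub] at hinner hinner'
  exact ⟨p, hp, horth, by simpa using norm_sq_eq_add_norm_sub_sq hinner,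
    by simpa using norm_sq_eq_add_norm_sub_sq hinner'⟩

lemma mem_orthogonal_of_sub_mem_orthogonal (h : IsTriangularFiltration J D V) {m M : ℕ}
    (hmM : m ≤ M) {w p : W} (hw : J w ∈ ((V m).map J)ᗮ) (hwp : J (w - p) ∈ ((V M).map J)ᗮ) :
    J p ∈ ((V m).map J)ᗮ := by
  have hle : ((V M).map J)ᗮ ≤ ((V m).map J)ᗮ :=
    Submodule.orthogonal_le (Submodule.map_mono (h.monotone hmM))
  simpa using sub_mem hw (hle hwp)

lemma mul_norm_sq_le_of_mem (h : IsTriangularFiltration J D V) {m M : ℕ} (hmM : m ≤ M) {p : W}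
    (hp : p ∈ V M) (horth : J p ∈ ((V m).map J)ᗮ) :
    ((m : ℝ) + 1) * ‖J p‖ ^ 2 ≤ ‖D p‖ ^ 2 := by
  induction M, hmM using Nat.le_induction generalizing p with
  | base =>
    have hJp : J p = 0 := inner_self_eq_zero.1
      (Submodule.inner_right_of_mem_orthogonal (Submodule.mem_map_of_mem hp) horth)
    simp [hJp]
  | succ M hmM ih =>
    obtain ⟨q, hq, hpq, hJ, hD⟩ := h.exists_projection M p
    have hq_le := ih hq (h.mem_orthogonal_of_sub_mem_orthogonal hmM horth hpq)
    have hrest : ‖D (p - q)‖ ^ 2 = ((M : ℝ) + 1) * ‖J (p - q)‖ ^ 2 := by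
      simpa only [real_inner_self_eq_norm_sq] using
        h.inner_eq_of_mem_orthogonal (sub_mem hp (h.monotone M.le_succ hq)) hpq
    calc ((m : ℝ) + 1) * ‖J p‖ ^ 2
        = ((m : ℝ) + 1) * ‖J q‖ ^ 2 + ((m : ℝ) + 1) * ‖J (p - q)‖ ^ 2 := by rw [hJ, mul_add]
      _ ≤ ‖D q‖ ^ 2 + ((M : ℝ) + 1) * ‖J (p - q)‖ ^ 2 := by gcongr
      _ = ‖D p‖ ^ 2 := by rw [hD, hrest]

theorem mul_norm_sq_le (h : IsTriangularFiltration J D V)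
    (hdense : ⊤ ≤ (⨆ M, (V M).map J).topologicalClosure) {m : ℕ} {w : W}
    (horth : J w ∈ ((V m).map J)ᗮ) : ((m : ℝ) + 1) * ‖J w‖ ^ 2 ≤ ‖D w‖ ^ 2 := by
  have := h.finiteDimensional
  choose p hp hwp _ hD using h.exists_projection (w := w)
  have hproj (M : ℕ) : ((V M).map J).starProjection (J w) = J (p M) :=
    Submodule.eq_starProjection_of_mem_orthogonal (Submodule.mem_map_of_mem (hp M))
      (by simpa using hwp M)
  have hlim : Tendsto (fun M => J (p M)) atTop (𝓝 (J w)) :=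
    (Submodule.starProjection_tendsto_self (fun M => (V M).map J)
      (fun _ _ hle => Submodule.map_mono (h.monotone hle)) (J w) hdense).congr hproj
  refine le_of_tendsto ((hlim.norm.pow 2).const_mul _) ?_
  filter_upwards [eventually_ge_atTop m] with M hmM
  calc ((m : ℝ) + 1) * ‖J (p M)‖ ^ 2
      ≤ ‖D (p M)‖ ^ 2 := h.mul_norm_sq_le_of_mem hmM (hp M)
        (h.mem_orthogonal_of_sub_mem_orthogonal hmM horth (hwp M))
    _ ≤ ‖D w‖ ^ 2 := by rw [hD M]; exact le_add_of_nonneg_right (sq_nonneg _)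

end IsTriangularFiltration

lemma exists_ne_zero_mem_orthogonal_of_finrank_lt [FiniteDimensional ℝ W] (J : W →ₗ[ℝ] H)
    (U : Submodule ℝ H) [FiniteDimensional ℝ U] (hlt : Module.finrank ℝ U < Module.finrank ℝ W) :
    ∃ w : W, w ≠ 0 ∧ J w ∈ Uᗮ := by
  obtain ⟨w, hw, hw0⟩ := Submodule.exists_mem_ne_zero_of_ne_bot <|
    LinearMap.ker_ne_bot_of_finrank_lt (f := U.orthogonalProjectionOnto.toLinearMap ∘ₗ J) hlt
  exact ⟨w, hw0, Submodule.orthogonalProjectionOnto_eq_zero_iff.1 hw⟩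

lemma exists_norm_le_mul_norm_of_injective [FiniteDimensional ℝ W] {G G' : Type*}
    [NormedAddCommGroup G] [NormedSpace ℝ G] [NormedAddCommGroup G'] [NormedSpace ℝ G']
    {J : W →ₗ[ℝ] G} (hJ : Function.Injective J) (D : W →ₗ[ℝ] G') :
    ∃ C : ℝ, ∀ w, ‖D w‖ ≤ C * ‖J w‖ := by
  let e := LinearEquiv.ofInjective J hJ
  let T : J.range →L[ℝ] G' := (D ∘ₗ e.symm.toLinearMap).toContinuousLinearMap
  exact ⟨‖T‖, fun w => by simpa [T, e] using T.le_opNorm (e w)⟩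

end SpectralGap

section Polynomials

open MvPolynomial

variable {σ R : Type*}

lemma monotone_restrictTotalDegree [CommSemiring R] : Monotone (restrictTotalDegree σ R) :=
  fun m M hmM p hp => by
    rw [mem_restrictTotalDegree] at hp ⊢
    exact hp.trans hmM

lemma restrictTotalDegree_le [CommSemiring R] {m : ℕ} {N : Submodule R (MvPolynomial σ R)}
    (hN : ∀ s : σ →₀ ℕ, s.degree ≤ m → monomial s 1 ∈ N) : restrictTotalDegree σ R m ≤ N := by
  rw [restrictTotalDegree, restrictSupport_eq_span, Submodule.span_le]
  exact Set.image_subset_iff.2 hN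

lemma mem_restrictTotalDegree_of_isHomogeneous [CommSemiring R] {p : MvPolynomial σ R} {d m : ℕ}
    (hp : p.IsHomogeneous d) (hdm : d ≤ m) : p ∈ restrictTotalDegree σ R m :=
  (mem_restrictTotalDegree ..).2 (hp.totalDegree_le.trans hdm)

lemma isHomogeneous_monomial_one [CommSemiring R] (s : σ →₀ ℕ) :
    (monomial s (1 : R)).IsHomogeneous s.degree :=
  isHomogeneous_monomial 1 rfl

lemma finrank_restrictTotalDegree [CommRing R] [Nontrivial R] [Fintype σ] (m : ℕ) :
    Module.finrank R (restrictTotalDegree σ R m) = (Fintype.card σ + m).choose m := by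
  classical
  have hfin : {s : σ →₀ ℕ | s.degree ≤ m} =
      ((Finset.range (m + 1)).biUnion (Finset.univ : Finset σ).finsuppAntidiag : Set (σ →₀ ℕ)) := by
    ext s
    simp [Finsupp.degree_eq_sum, Finset.mem_finsuppAntidiag]
  have hcard : Nat.card {s : σ →₀ ℕ | s.degree ≤ m} = (Fintype.card σ + m).choose m := by
    rw [hfin, Nat.card_coe_set_eq, Set.ncard_coe_finset, Finset.card_biUnion]
    · simp only [Finset.card_finsuppAntidiag_nat_eq_multichoose, Finset.card_univ]
      rw [Nat.sum_range_multichoose, add_comm, ← Nat.choose_symm_add]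
    · intro i _ j _ hij
      refine Finset.disjoint_left.2 fun s hsi hsj => hij ?_
      rw [Finset.mem_finsuppAntidiag] at hsi hsj
      exact hsi.1.symm.trans hsj.1
  exact (Module.finrank_eq_nat_card_basis (basisRestrictSupport R _)).trans hcard

variable (σ R) in
/-- The Ornstein–Uhlenbeck operator `p ↦ ∑ i, (xᵢ ∂ᵢ p - ∂ᵢ² p)` on polynomials. With this sign it
is nonnegative, being the operator of the Gaussian Dirichlet form `∫ |∇p|²`. -/
noncomputable def ornsteinUhlenbeck [CommRing R] [Fintype σ] :
    MvPolynomial σ R →ₗ[R] MvPolynomial σ R :=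
  ∑ i, (LinearMap.mulLeft R (X i) ∘ₗ (pderiv i).toLinearMap -
    (pderiv i).toLinearMap ∘ₗ (pderiv i).toLinearMap)

variable [CommRing R] [Fintype σ]

lemma ornsteinUhlenbeck_apply (p : MvPolynomial σ R) :
    ornsteinUhlenbeck σ R p = ∑ i, (X i * pderiv i p - pderiv i (pderiv i p)) := by
  simp [ornsteinUhlenbeck]

lemma ornsteinUhlenbeck_of_isHomogeneous {p : MvPolynomial σ R} {d : ℕ} (hp : p.IsHomogeneous d) :
    ornsteinUhlenbeck σ R p = (d : R) • p - ∑ i, pderiv i (pderiv i p) := by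
  rw [ornsteinUhlenbeck_apply, Finset.sum_sub_distrib, hp.sum_X_mul_pderiv, Nat.cast_smul_eq_nsmul]

lemma ornsteinUhlenbeck_sub_smul_mem {m : ℕ} {p : MvPolynomial σ R}
    (hp : p ∈ restrictTotalDegree σ R (m + 1)) :
    ornsteinUhlenbeck σ R p - ((m : R) + 1) • p ∈ restrictTotalDegree σ R m := by
  suffices hle : restrictTotalDegree σ R (m + 1) ≤ (restrictTotalDegree σ R m).comap
      (ornsteinUhlenbeck σ R - ((m : R) + 1) • LinearMap.id) from hle hp
  refine restrictTotalDegree_le fun s hs => ?_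
  have hmono := isHomogeneous_monomial_one (R := R) s
  have hlaplacian : ∑ i, pderiv i (pderiv i (monomial s (1 : R))) ∈ restrictTotalDegree σ R m :=
    sum_mem fun i _ => mem_restrictTotalDegree_of_isHomogeneous hmono.pderiv.pderiv (by lia)
  have heuler : ((s.degree : R) - (m + 1)) • monomial s (1 : R) ∈ restrictTotalDegree σ R m := by
    obtain hlt | heq := Nat.le_iff_lt_or_eq.1 hs
    · exact Submodule.smul_mem _ _ (mem_restrictTotalDegree_of_isHomogeneous hmono (by lia))
    · simp [heq]
  have hsplit : ornsteinUhlenbeck σ R (monomial s 1) - ((m : R) + 1) • monomial s 1 =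
      ((s.degree : R) - (m + 1)) • monomial s 1 - ∑ i, pderiv i (pderiv i (monomial s 1)) := by
    rw [ornsteinUhlenbeck_of_isHomogeneous hmono, sub_smul]
    exact sub_right_comm ..
  rw [Submodule.mem_comap, LinearMap.sub_apply, LinearMap.smul_apply, LinearMap.id_apply, hsplit]
  exact sub_mem heuler hlaplacian

end Polynomials

section Density

open ProbabilityTheory

variable {E : Type*} [NormedAddCommGroup E] [InnerProductSpace ℝ E] [MeasurableSpace E]
  {μ : Measure E} {g : E → ℝ}

lemma charFun_withDensity_ofReal (hg : AEMeasurable g μ) (ξ : E) :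
    charFun (μ.withDensity fun x => ENNReal.ofReal (g x)) ξ =
      ∫ x, ((max (g x) 0 : ℝ) : ℂ) * Complex.exp (⟪x, ξ⟫ * Complex.I) ∂μ := by
  rw [charFun_apply, integral_withDensity_eq_integral_toReal_smul₀ hg.ennreal_ofReal (by simp)]
  simp [ENNReal.toReal_ofReal']

variable [BorelSpace E]

lemma memLp_exp_abs_inner (hexp : integrableExpSet (‖·‖) μ = Set.univ) (ξ : E) :
    MemLp (fun x => Real.exp |⟪x, ξ⟫|) 2 μ := by
  have hcont : Continuous fun x => Real.exp |⟪x, ξ⟫| := by fun_prop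
  have hint : Integrable (fun x => Real.exp (2 * ‖ξ‖ * ‖x‖)) μ :=
    hexp.ge (Set.mem_univ (2 * ‖ξ‖))
  rw [memLp_two_iff_integrable_sq hcont.aestronglyMeasurable]
  refine hint.mono' (hcont.pow 2).aestronglyMeasurable (.of_forall fun x => ?_)
  rw [Real.norm_of_nonneg (by positivity), ← Real.exp_nat_mul, Real.exp_le_exp, Nat.cast_ofNat,
    mul_assoc, mul_comm ‖ξ‖]
  gcongr
  exact abs_real_inner_le_norm x ξ

variable [SecondCountableTopology E]

lemma integrable_ofReal_mul_cexp_inner (hg : Integrable g μ) (ξ : E) :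
    Integrable (fun x => (g x : ℂ) * Complex.exp (⟪x, ξ⟫ * Complex.I)) μ := by
  refine hg.ofReal.mul_bdd (c := 1) (by fun_prop) (.of_forall fun x => ?_)
  rw [Complex.norm_exp_ofReal_mul_I]

lemma ae_eq_zero_of_integral_mul_cexp_inner_eq_zero [CompleteSpace E] (hg : Integrable g μ)
    (hzero : ∀ ξ, ∫ x, (g x : ℂ) * Complex.exp (⟪x, ξ⟫ * Complex.I) ∂μ = 0) : g =ᵐ[μ] 0 := by
  have hpos_ne_top : ∫⁻ x, ENNReal.ofReal (g x) ∂μ ≠ ⊤ := hg.lintegral_lt_top.ne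
  have hneg : Integrable (fun x => -g x) μ := hg.neg
  have := isFiniteMeasure_withDensity hpos_ne_top
  have := isFiniteMeasure_withDensity hneg.lintegral_lt_top.ne
  have hmeas : (μ.withDensity fun x => ENNReal.ofReal (g x)) =
      μ.withDensity fun x => ENNReal.ofReal (-g x) := by
    refine Measure.ext_of_charFun (funext fun ξ => sub_eq_zero.1 ?_)
    rw [charFun_withDensity_ofReal hg.aemeasurable, charFun_withDensity_ofReal hneg.aemeasurable,
      ← integral_sub (integrable_ofReal_mul_cexp_inner hg.pos_part ξ)
        (integrable_ofReal_mul_cexp_inner hg.neg_part ξ), ← hzero ξ]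
    simp only [← sub_mul, ← Complex.ofReal_sub, max_zero_sub_max_neg_zero_eq_self]
  filter_upwards [(withDensity_eq_iff hg.aemeasurable.ennreal_ofReal
    hneg.aemeasurable.ennreal_ofReal hpos_ne_top).1 hmeas] with x hx
  have hmax := congrArg ENNReal.toReal hx
  rw [ENNReal.toReal_ofReal', ENNReal.toReal_ofReal'] at hmax
  rw [← max_zero_sub_max_neg_zero_eq_self (g x), hmax, sub_self, Pi.zero_apply]

lemma hasSum_integral_mul_inner_pow_div_factorial (hexp : integrableExpSet (‖·‖) μ = Set.univ)
    (hg : MemLp g 2 μ) (ξ : E) :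
    HasSum (fun j : ℕ => ∫ x, (g x : ℂ) * ((⟪x, ξ⟫ * Complex.I) ^ j / (j.factorial : ℂ)) ∂μ)
      (∫ x, (g x : ℂ) * Complex.exp (⟪x, ξ⟫ * Complex.I) ∂μ) := by
  have hmeas := hg.aestronglyMeasurable.aemeasurable
  refine hasSum_integral_of_dominated_convergence
    (fun j x => |g x| * (|⟪x, ξ⟫| ^ j / j.factorial)) (fun j => ?_)
    (fun j => .of_forall fun x => by simp)
    (.of_forall fun x => (Real.summable_pow_div_factorial _).mul_left _) ?_
    (.of_forall fun x => ?_)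
  · exact AEMeasurable.aestronglyMeasurable (by fun_prop)
  · have hsum (x : E) : ∑' j : ℕ, |g x| * (|⟪x, ξ⟫| ^ j / j.factorial) =
        |g x| * Real.exp |⟪x, ξ⟫| := by
      rw [tsum_mul_left, Real.exp_eq_exp_ℝ, NormedSpace.exp_eq_tsum_div]
    simp only [hsum]
    exact hg.abs.integrable_mul (memLp_exp_abs_inner hexp ξ)
  · refine HasSum.mul_left _ ?_
    rw [Complex.exp_eq_exp_ℂ]
    exact NormedSpace.expSeries_div_hasSum_exp _

theorem ae_eq_zero_of_integral_mul_inner_pow_eq_zero [CompleteSpace E] [IsFiniteMeasure μ]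
    (hexp : integrableExpSet (‖·‖) μ = Set.univ) (hg : MemLp g 2 μ)
    (hzero : ∀ (ξ : E) (j : ℕ), ∫ x, g x * ⟪x, ξ⟫ ^ j ∂μ = 0) : g =ᵐ[μ] 0 := by
  refine ae_eq_zero_of_integral_mul_cexp_inner_eq_zero (hg.integrable one_le_two) fun ξ => ?_
  refine (hasSum_integral_mul_inner_pow_div_factorial hexp hg ξ).unique ?_
  convert! hasSum_zero with j
  calc ∫ x, (g x : ℂ) * ((⟪x, ξ⟫ * Complex.I) ^ j / (j.factorial : ℂ)) ∂μ
      = ∫ x, Complex.I ^ j / j.factorial * ((g x * ⟪x, ξ⟫ ^ j : ℝ) : ℂ) ∂μ := by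
        congr with x
        push_cast
        ring
    _ = 0 := by rw [integral_const_mul, integral_complex_ofReal, hzero]; simp

end Density

section PolynomialFunctions

open MvPolynomial ProbabilityTheory

variable {σ : Type*}

variable (σ) in
/-- The algebra morphism sending a real polynomial to the function it defines on Euclidean space. -/
noncomputable def evalEuclidean : MvPolynomial σ ℝ →ₐ[ℝ] (EuclideanSpace ℝ σ → ℝ) :=
  aeval fun i x => x i

lemma evalEuclidean_C (a : ℝ) : evalEuclidean σ (C a) = fun _ => a :=
  aeval_C _ a

lemma evalEuclidean_X (i : σ) : evalEuclidean σ (X i) = fun x => x i :=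
  aeval_X _ i

lemma evalEuclidean_apply (p : MvPolynomial σ ℝ) (x : EuclideanSpace ℝ σ) :
    evalEuclidean σ p x = eval x.ofLp p := by
  induction p using MvPolynomial.induction_on with
  | C a => rw [evalEuclidean_C, eval_C]
  | add p q hp hq => rw [map_add, map_add, Pi.add_apply, hp, hq]
  | mul_X p i hp => rw [map_mul, map_mul, Pi.mul_apply, hp, evalEuclidean_X, eval_X]

lemma injective_evalEuclidean : Function.Injective (evalEuclidean σ) :=
  fun p q hpq => MvPolynomial.funext fun x => by
    simpa only [evalEuclidean_apply] using congrFun hpq (WithLp.toLp 2 x)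

lemma contDiff_evalEuclidean [Fintype σ] {k : WithTop ℕ∞} (p : MvPolynomial σ ℝ) :
    ContDiff ℝ k (evalEuclidean σ p) := by
  induction p using MvPolynomial.induction_on with
  | C a => rw [evalEuclidean_C]; exact contDiff_const
  | add p q hp hq => rw [map_add]; exact hp.add hq
  | mul_X p i hp => rw [map_mul, evalEuclidean_X]; exact hp.mul (by fun_prop)

lemma differentiable_evalEuclidean [Finite σ] (p : MvPolynomial σ ℝ) :
    Differentiable ℝ (evalEuclidean σ p) :=
  have := Fintype.ofFinite σ
  (contDiff_evalEuclidean (k := 1) p).differentiable one_ne_zero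

lemma locallyLipschitz_evalEuclidean [Fintype σ] (p : MvPolynomial σ ℝ) :
    LocallyLipschitz (evalEuclidean σ p) :=
  (contDiff_evalEuclidean p).locallyLipschitz

lemma fderiv_evalEuclidean_single [Finite σ] [DecidableEq σ] (p : MvPolynomial σ ℝ)
    (x : EuclideanSpace ℝ σ) (i : σ) :
    fderiv ℝ (evalEuclidean σ p) x (EuclideanSpace.single i 1) =
      evalEuclidean σ (pderiv i p) x := by
  have := Fintype.ofFinite σ
  induction p using MvPolynomial.induction_on with
  | C a => simp only [evalEuclidean_C, fderiv_fun_const, pderiv_C, map_zero, Pi.zero_apply,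
      zero_apply]
  | add p q hp hq =>
    rw [map_add, fderiv_add (differentiable_evalEuclidean p x) (differentiable_evalEuclidean q x)]
    simp [hp, hq]
  | mul_X p j hp =>
    have hcoord : fderiv ℝ (evalEuclidean σ (X j)) x = EuclideanSpace.proj j := by
      rw [evalEuclidean_X]
      exact (EuclideanSpace.proj j : EuclideanSpace ℝ σ →L[ℝ] ℝ).fderiv
    rw [map_mul, fderiv_mul (differentiable_evalEuclidean p x)
      (differentiable_evalEuclidean (X j) x), hcoord]
    rcases eq_or_ne j i with rfl | hne
    · simp [hp, evalEuclidean_X]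
    · simp [hp, evalEuclidean_X, pderiv_X_of_ne hne, hne]

variable [Fintype σ] {μ : Measure (EuclideanSpace ℝ σ)}

lemma memLp_coord (hexp : integrableExpSet (fun x : EuclideanSpace ℝ σ => ‖x‖) μ = Set.univ)
    (i : σ) (r : ℝ≥0) : MemLp (fun x : EuclideanSpace ℝ σ => x i) r μ := by
  have hnorm : MemLp (fun x : EuclideanSpace ℝ σ => ‖x‖) r μ :=
    memLp_of_mem_interior_integrableExpSet (by simp [hexp]) r
  exact hnorm.mono (Continuous.aestronglyMeasurable (by fun_prop))
    (.of_forall fun x => by simpa using PiLp.norm_apply_le x i)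

lemma memLp_evalEuclidean [IsFiniteMeasure μ]
    (hexp : integrableExpSet (fun x : EuclideanSpace ℝ σ => ‖x‖) μ = Set.univ)
    (p : MvPolynomial σ ℝ) (r : ℝ≥0) : MemLp (evalEuclidean σ p) r μ := by
  induction p using MvPolynomial.induction_on generalizing r with
  | C a => rw [evalEuclidean_C]; exact memLp_const a
  | add p q hp hq => rw [map_add]; exact (hp r).add (hq r)
  | mul_X p i hp =>
    have : HolderTriple (2 * r : ℝ≥0) (2 * r : ℝ≥0) r := ⟨by
      rw [ENNReal.coe_mul, ENNReal.mul_inv (.inl (by simp)) (.inl (by simp)), ← add_mul,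
        ENNReal.coe_ofNat, ENNReal.inv_two_add_inv_two, one_mul]⟩
    rw [map_mul, evalEuclidean_X]
    exact (memLp_coord hexp i (2 * r)).mul (hp (2 * r))

lemma evalEuclidean_sum_smul_X_pow (ξ x : EuclideanSpace ℝ σ) (j : ℕ) :
    evalEuclidean σ ((∑ i, ξ i • X i) ^ j) x = ⟪x, ξ⟫ ^ j := by
  simp [map_sum, evalEuclidean_X, PiLp.inner_apply]

theorem ae_eq_zero_of_integral_mul_evalEuclidean_eq_zero [IsFiniteMeasure μ]
    (hexp : integrableExpSet (fun x : EuclideanSpace ℝ σ => ‖x‖) μ = Set.univ)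
    {g : EuclideanSpace ℝ σ → ℝ} (hg : MemLp g 2 μ)
    (hzero : ∀ p, ∫ x, g x * evalEuclidean σ p x ∂μ = 0) : g =ᵐ[μ] 0 :=
  ae_eq_zero_of_integral_mul_inner_pow_eq_zero hexp hg fun ξ j => by
    simpa only [evalEuclidean_sum_smul_X_pow] using hzero ((∑ i, ξ i • X i) ^ j)

end PolynomialFunctions

section GaussianMeasure

open ProbabilityTheory hiding stdGaussian

section InnerProductSpace

variable {E : Type*} [NormedAddCommGroup E] [InnerProductSpace ℝ E] [FiniteDimensional ℝ E]
  [MeasurableSpace E] [BorelSpace E]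

lemma integrable_exp_mul_norm_sub_mul_norm_sq (a : ℝ) {b : ℝ} (hb : 0 < b) :
    Integrable fun x : E => Real.exp (a * ‖x‖ - b * ‖x‖ ^ 2) := by
  have hgauss : Integrable fun x : E => Real.exp (a ^ 2 / (2 * b) - b / 2 * ‖x‖ ^ 2) := by
    have hcexp := (GaussianFourier.integrable_cexp_neg_mul_sq_norm_add (V := E)
      (b := (b / 2 : ℝ)) (by simpa using hb) 0 0).norm
    refine (hcexp.const_mul (Real.exp (a ^ 2 / (2 * b)))).congr (.of_forall fun x => ?_)
    have hre : (-((b / 2 : ℝ) : ℂ) * (‖x‖ : ℂ) ^ 2 + 0 * (⟪(0 : E), x⟫ : ℂ)).re =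
        -(b / 2 * ‖x‖ ^ 2) := by
      norm_cast
      simp
    simp only [Complex.norm_exp, hre, ← Real.exp_add, sub_eq_add_neg]
  refine hgauss.mono' (by fun_prop) (.of_forall fun x => ?_)
  rw [Real.norm_eq_abs, Real.abs_exp, Real.exp_le_exp]
  have hsq : a ^ 2 / (2 * b) - b / 2 * ‖x‖ ^ 2 - (a * ‖x‖ - b * ‖x‖ ^ 2) =
      (a - b * ‖x‖) ^ 2 / (2 * b) := by
    field_simp
    ring
  have : 0 ≤ (a - b * ‖x‖) ^ 2 / (2 * b) := by positivity
  linarith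

/-- The density of the standard Gaussian measure of a finite-dimensional inner product space with
respect to its volume; the normalizing constant is left as an integral. -/
noncomputable def gaussianDensity (x : E) : ℝ :=
  (∫ y : E, Real.exp (-‖y‖ ^ 2 / 2))⁻¹ * Real.exp (-‖x‖ ^ 2 / 2)

lemma integrable_exp_neg_norm_sq_div_two : Integrable fun x : E => Real.exp (-‖x‖ ^ 2 / 2) := by
  refine (integrable_exp_mul_norm_sub_mul_norm_sq (E := E) 0 one_half_pos).congr
    (.of_forall fun x => ?_)
  ring_nf

lemma gaussianDensity_pos (x : E) : 0 < gaussianDensity x :=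
  mul_pos (inv_pos.2 (integral_exp_pos integrable_exp_neg_norm_sq_div_two)) (Real.exp_pos _)

lemma contDiff_gaussianDensity {k : WithTop ℕ∞} : ContDiff ℝ k (gaussianDensity : E → ℝ) :=
  contDiff_const.mul ((contDiff_norm_sq ℝ).neg.div_const 2).exp

@[fun_prop]
lemma continuous_gaussianDensity : Continuous (gaussianDensity : E → ℝ) :=
  (contDiff_gaussianDensity (k := 0)).continuous

lemma fderiv_gaussianDensity_apply (x v : E) :
    fderiv ℝ gaussianDensity x v = -(⟪x, v⟫ * gaussianDensity x) := by
  have hexponent : HasFDerivAt (fun y : E => -‖y‖ ^ 2 / 2) (-innerSL ℝ x) x := by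
    refine (((hasStrictFDerivAt_norm_sq x).hasFDerivAt.const_mul (-2⁻¹ : ℝ)).congr_fderiv
      ?_).congr_of_eventuallyEq (.of_forall fun y => by ring)
    ext w
    simp
  have hdensity : fderiv ℝ gaussianDensity x = _ := (hexponent.exp.const_mul _).fderiv
  simp only [hdensity, gaussianDensity, smul_apply, neg_apply, innerSL_apply_apply, smul_eq_mul]
  ring

lemma integrable_exp_mul_norm_mul_gaussianDensity (a : ℝ) :
    Integrable fun x : E => Real.exp (a * ‖x‖) * gaussianDensity x := by
  refine ((integrable_exp_mul_norm_sub_mul_norm_sq (E := E) a one_half_pos).const_mul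
    (∫ y : E, Real.exp (-‖y‖ ^ 2 / 2))⁻¹).congr (.of_forall fun x => ?_)
  simp only [gaussianDensity, mul_left_comm (Real.exp _), ← Real.exp_add]
  ring_nf

end InnerProductSpace

variable {n : ℕ}

lemma stdGaussian_eq_withDensity_gaussianDensity :
    stdGaussian n = volume.withDensity fun x => ENNReal.ofReal (gaussianDensity x) := by
  have hmass_pos := integral_exp_pos
    (integrable_exp_neg_norm_sq_div_two (E := EuclideanSpace ℝ (Fin n)))
  rw [stdGaussian, withDensity_apply _ .univ, Measure.restrict_univ,
    ← ofReal_integral_eq_lintegral_ofReal integrable_exp_neg_norm_sq_div_two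
      (.of_forall fun _ => (Real.exp_pos _).le),
    ← ENNReal.ofReal_inv_of_pos hmass_pos,
    ← withDensity_smul _ (by fun_prop)]
  congr with x
  simp only [gaussianDensity, ENNReal.ofReal_mul (inv_pos.2 hmass_pos).le, Pi.smul_apply,
    smul_eq_mul]

lemma integrable_stdGaussian_iff {g : EuclideanSpace ℝ (Fin n) → ℝ} :
    Integrable g (stdGaussian n) ↔ Integrable fun x => g x * gaussianDensity x := by
  rw [stdGaussian_eq_withDensity_gaussianDensity,
    integrable_withDensity_iff (by fun_prop) (by simp)]
  simp only [ENNReal.toReal_ofReal (gaussianDensity_pos _).le]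

lemma integral_stdGaussian (g : EuclideanSpace ℝ (Fin n) → ℝ) :
    ∫ x, g x ∂stdGaussian n = ∫ x, g x * gaussianDensity x := by
  rw [stdGaussian_eq_withDensity_gaussianDensity,
    integral_withDensity_eq_integral_toReal_smul (by fun_prop) (by simp)]
  simp only [ENNReal.toReal_ofReal (gaussianDensity_pos _).le, smul_eq_mul, mul_comm]

instance isFiniteMeasure_stdGaussian : IsFiniteMeasure (stdGaussian n) := by
  rw [← integrable_const_iff_isFiniteMeasure (c := (1 : ℝ)) one_ne_zero, integrable_stdGaussian_iff]
  simpa using integrable_exp_mul_norm_mul_gaussianDensity (E := EuclideanSpace ℝ (Fin n)) 0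

lemma stdGaussian_absolutelyContinuous : stdGaussian n ≪ volume := by
  rw [stdGaussian_eq_withDensity_gaussianDensity]
  exact withDensity_absolutelyContinuous _ _

lemma absolutelyContinuous_stdGaussian : volume ≪ stdGaussian n := by
  rw [stdGaussian_eq_withDensity_gaussianDensity]
  exact withDensity_absolutelyContinuous'
    (by fun_prop)
    (.of_forall fun x => by simp [gaussianDensity_pos])

instance isOpenPosMeasure_stdGaussian : (stdGaussian n).IsOpenPosMeasure :=
  absolutelyContinuous_stdGaussian.isOpenPosMeasure

lemma integrableExpSet_norm_stdGaussian :
    integrableExpSet (fun x => ‖x‖) (stdGaussian n) = Set.univ :=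
  Set.eq_univ_of_forall fun a =>
    integrable_stdGaussian_iff.2 (integrable_exp_mul_norm_mul_gaussianDensity a)

theorem integral_fderiv_mul_stdGaussian {f u : EuclideanSpace ℝ (Fin n) → ℝ}
    {v : EuclideanSpace ℝ (Fin n)} (hf : LocallyLipschitz f) (hu : ContDiff ℝ 1 u)
    (hf'u : Integrable (fun x => fderiv ℝ f x v * u x) (stdGaussian n))
    (hfu' : Integrable (fun x => f x * (⟪x, v⟫ * u x - fderiv ℝ u x v)) (stdGaussian n))
    (hfu : Integrable (fun x => f x * u x) (stdGaussian n)) :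
    ∫ x, fderiv ℝ f x v * u x ∂stdGaussian n =
      ∫ x, f x * (⟪x, v⟫ * u x - fderiv ℝ u x v) ∂stdGaussian n := by
  have hderiv (x) : fderiv ℝ (fun y => u y * gaussianDensity y) x v =
      -((⟪x, v⟫ * u x - fderiv ℝ u x v) * gaussianDensity x) := by
    rw [fderiv_fun_mul (hu.differentiable one_ne_zero x)
      (contDiff_gaussianDensity.differentiable one_ne_zero x)]
    simp only [add_apply, smul_apply, fderiv_gaussianDensity_apply, smul_eq_mul]
    ring
  simp only [integrable_stdGaussian_iff, integral_stdGaussian, mul_assoc] at hf'u hfu' hfu ⊢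
  rw [integral_fderiv_mul_eq_neg hf (hu.mul contDiff_gaussianDensity) hf'u
    (by simpa only [hderiv, mul_neg] using hfu'.fun_neg) hfu]
  simp only [hderiv, mul_neg, integral_neg, neg_neg]

end GaussianMeasure

section SobolevSpace

lemma inner_toLp_toLp {α G : Type*} [MeasurableSpace α] {μ : Measure α} [NormedAddCommGroup G]
    [InnerProductSpace ℝ G] {f g : α → G} (hf : MemLp f 2 μ) (hg : MemLp g 2 μ) :
    ⟪hf.toLp f, hg.toLp g⟫ = ∫ x, ⟪f x, g x⟫ ∂μ := by
  rw [L2.inner_def]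
  refine integral_congr_ae ?_
  filter_upwards [hf.coeFn_toLp, hg.coeFn_toLp] with x hfx hgx
  rw [hfx, hgx]

lemma memLp_two_iff_lintegral_ofReal_norm_sq_lt_top {α G : Type*} [MeasurableSpace α]
    {μ : Measure α} [NormedAddCommGroup G] {f : α → G} (hf : AEStronglyMeasurable f μ) :
    MemLp f 2 μ ↔ ∫⁻ x, ENNReal.ofReal (‖f x‖ ^ 2) ∂μ < ⊤ := by
  rw [memLp_two_iff_integrable_sq_norm hf, lt_top_iff_ne_top]
  exact (lintegral_ofReal_ne_top_iff_integrable (hf.norm.pow 2)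
    (.of_forall fun x => sq_nonneg _)).symm

variable {E : Type*} [NormedAddCommGroup E] [InnerProductSpace ℝ E] [FiniteDimensional ℝ E]

lemma gradient_add {f g : E → ℝ} {x : E} (hf : DifferentiableAt ℝ f x)
    (hg : DifferentiableAt ℝ g x) : ∇ (f + g) x = ∇ f x + ∇ g x := by
  rw [gradient, fderiv_add hf hg, map_add, gradient, gradient]

lemma gradient_const_smul (c : ℝ) (f : E → ℝ) (x : E) : ∇ (c • f) x = c • ∇ f x := by
  simp [gradient, fderiv_const_smul_field]

variable [MeasurableSpace E] [BorelSpace E] {μ : Measure E} {f g : E → ℝ}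

lemma measurable_gradient (f : E → ℝ) : Measurable (∇ f) :=
  (InnerProductSpace.toDual ℝ E).symm.continuous.measurable.comp (measurable_fderiv ℝ f)

lemma ae_differentiableAt_of_absolutelyContinuous (hμ : μ ≪ volume) (hf : LocallyLipschitz f) :
    ∀ᵐ x ∂μ, DifferentiableAt ℝ f x :=
  hμ.ae_le (ae_differentiableAt_of_locallyLipschitz hf)

lemma localLip_ae_eq_norm_gradient (hμ : μ ≪ volume) (hf : LocallyLipschitz f) :
    localLip f =ᵐ[μ] fun x => ‖∇ f x‖ := by
  filter_upwards [ae_differentiableAt_of_absolutelyContinuous hμ hf] with x hx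
  rw [localLip_eq_norm_fderiv hx, gradient, LinearIsometryEquiv.norm_map]

lemma memW12Lip_iff (hμ : μ ≪ volume) :
    memW12Lip μ f ↔ LocallyLipschitz f ∧ MemLp f 2 μ ∧ MemLp (∇ f) 2 μ := by
  refine and_congr_right fun hf => ?_
  have hgradient : ∫⁻ x, ENNReal.ofReal (localLip f x ^ 2) ∂μ =
      ∫⁻ x, ENNReal.ofReal (‖∇ f x‖ ^ 2) ∂μ :=
    lintegral_congr_ae ((localLip_ae_eq_norm_gradient hμ hf).mono fun x hx => by simp only [hx])
  rw [memLp_two_iff_lintegral_ofReal_norm_sq_lt_top hf.continuous.aestronglyMeasurable,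
    memLp_two_iff_lintegral_ofReal_norm_sq_lt_top (measurable_gradient f).aestronglyMeasurable,
    ENNReal.add_lt_top, hgradient]
  simp only [Real.norm_eq_abs, sq_abs]

lemma gradient_add_ae_eq (hμ : μ ≪ volume) (hf : LocallyLipschitz f) (hg : LocallyLipschitz g) :
    ∇ (f + g) =ᵐ[μ] ∇ f + ∇ g := by
  filter_upwards [ae_differentiableAt_of_absolutelyContinuous hμ hf,
    ae_differentiableAt_of_absolutelyContinuous hμ hg] with x using gradient_add

/-- The metric Sobolev space `W^{1,2}_Lip` as a space of functions. It is closed under addition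
because, by Rademacher's theorem, `μ ≪ volume` makes the gradient almost everywhere additive. -/
def sobolevSpace (hμ : μ ≪ volume) : Submodule ℝ (E → ℝ) where
  carrier := {f | memW12Lip μ f}
  zero_mem' := (memW12Lip_iff hμ).2
    ⟨.const 0, MemLp.zero, by simp [Pi.zero_def, gradient_fun_const']⟩
  add_mem' {f g} hf hg := by
    obtain ⟨hf, hf2, hf'⟩ := (memW12Lip_iff hμ).1 hf
    obtain ⟨hg, hg2, hg'⟩ := (memW12Lip_iff hμ).1 hg
    exact (memW12Lip_iff hμ).2
      ⟨hf.add hg, hf2.add hg2, (hf'.add hg').ae_eq (gradient_add_ae_eq hμ hf hg).symm⟩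
  smul_mem' c f hf := by
    obtain ⟨hf, hf2, hf'⟩ := (memW12Lip_iff hμ).1 hf
    refine (memW12Lip_iff hμ).2 ⟨?_, hf2.const_smul c, ?_⟩
    · exact (lipschitzWith_smul c).locallyLipschitz.comp hf
    · exact (hf'.const_smul c).ae_eq (.of_forall fun x => (gradient_const_smul c f x).symm)

section

variable {hμ : μ ≪ volume}

lemma sobolevSpace.locallyLipschitz (f : sobolevSpace hμ) : LocallyLipschitz f.1 :=
  f.2.1

lemma sobolevSpace.memLp (f : sobolevSpace hμ) : MemLp f.1 2 μ :=
  ((memW12Lip_iff hμ).1 f.2).2.1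

lemma sobolevSpace.memLp_gradient (f : sobolevSpace hμ) : MemLp (∇ f.1) 2 μ :=
  ((memW12Lip_iff hμ).1 f.2).2.2

end

variable (hμ : μ ≪ volume)

/-- The inclusion of the Sobolev space into `L²`. -/
noncomputable def sobolevToLp : sobolevSpace hμ →ₗ[ℝ] Lp ℝ 2 μ where
  toFun f := (sobolevSpace.memLp f).toLp f.1
  map_add' f g := MemLp.toLp_add (sobolevSpace.memLp f) (sobolevSpace.memLp g)
  map_smul' c f := MemLp.toLp_const_smul c (sobolevSpace.memLp f)

/-- The gradient as a linear map from the Sobolev space to the square-integrable vector fields. -/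
noncomputable def sobolevGradient : sobolevSpace hμ →ₗ[ℝ] Lp E 2 μ where
  toFun f := (sobolevSpace.memLp_gradient f).toLp (∇ f.1)
  map_add' f g := by
    rw [← MemLp.toLp_add (sobolevSpace.memLp_gradient f) (sobolevSpace.memLp_gradient g)]
    exact MemLp.toLp_congr _ _
      (gradient_add_ae_eq hμ (sobolevSpace.locallyLipschitz f) (sobolevSpace.locallyLipschitz g))
  map_smul' c f := by
    rw [RingHom.id_apply, ← MemLp.toLp_const_smul c (sobolevSpace.memLp_gradient f)]
    exact MemLp.toLp_congr _ _ (.of_forall (gradient_const_smul c f.1))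

lemma inner_sobolevToLp (f g : sobolevSpace hμ) :
    ⟪sobolevToLp hμ f, sobolevToLp hμ g⟫ = ∫ x, f.1 x * g.1 x ∂μ := by
  refine (inner_toLp_toLp (sobolevSpace.memLp f) (sobolevSpace.memLp g)).trans ?_
  simp only [RCLike.inner_apply', conj_trivial]

lemma inner_sobolevGradient (f g : sobolevSpace hμ) :
    ⟪sobolevGradient hμ f, sobolevGradient hμ g⟫ = ∫ x, ⟪∇ f.1 x, ∇ g.1 x⟫ ∂μ :=
  inner_toLp_toLp (sobolevSpace.memLp_gradient f) (sobolevSpace.memLp_gradient g)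

lemma norm_sobolevToLp_sq (f : sobolevSpace hμ) :
    ‖sobolevToLp hμ f‖ ^ 2 = ∫ x, f.1 x ^ 2 ∂μ := by
  rw [← real_inner_self_eq_norm_sq, inner_sobolevToLp]
  simp only [sq]

lemma norm_sobolevGradient_sq (f : sobolevSpace hμ) :
    ‖sobolevGradient hμ f‖ ^ 2 = ∫ x, localLip f.1 x ^ 2 ∂μ := by
  rw [← real_inner_self_eq_norm_sq, inner_sobolevGradient]
  refine integral_congr_ae ?_
  filter_upwards [localLip_ae_eq_norm_gradient hμ (sobolevSpace.locallyLipschitz f)] with x hx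
  rw [hx, real_inner_self_eq_norm_sq]

lemma injective_sobolevToLp [μ.IsOpenPosMeasure] : Function.Injective (sobolevToLp hμ) :=
  fun f g hfg => Subtype.ext <|
    (Continuous.ae_eq_iff_eq μ (sobolevSpace.locallyLipschitz f).continuous
      (sobolevSpace.locallyLipschitz g).continuous).1 <|
      (MemLp.toLp_eq_toLp_iff (sobolevSpace.memLp f) (sobolevSpace.memLp g)).1 hfg

end SobolevSpace

section PolynomialSobolev

open MvPolynomial

open ProbabilityTheory hiding stdGaussian

variable {σ : Type*} [Fintype σ]

lemma gradient_apply [DecidableEq σ] (f : EuclideanSpace ℝ σ → ℝ) (x : EuclideanSpace ℝ σ) (i : σ) :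
    ∇ f x i = fderiv ℝ f x (EuclideanSpace.single i 1) := by
  rw [← inner_gradient_left, EuclideanSpace.inner_single_right, one_mul, conj_trivial]

lemma gradient_evalEuclidean_apply (p : MvPolynomial σ ℝ) (x : EuclideanSpace ℝ σ) (i : σ) :
    ∇ (evalEuclidean σ p) x i = evalEuclidean σ (pderiv i p) x := by
  classical
  rw [gradient_apply, fderiv_evalEuclidean_single]

variable {μ : Measure (EuclideanSpace ℝ σ)} [IsFiniteMeasure μ]

lemma memLp_gradient_evalEuclidean
    (hexp : integrableExpSet (fun x : EuclideanSpace ℝ σ => ‖x‖) μ = Set.univ)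
    (p : MvPolynomial σ ℝ) : MemLp (∇ (evalEuclidean σ p)) 2 μ :=
  MemLp.of_eval_piLp fun i => (memLp_evalEuclidean hexp (pderiv i p) 2).ae_eq
    (.of_forall fun x => (gradient_evalEuclidean_apply p x i).symm)

variable (hμ : μ ≪ volume)
  (hexp : integrableExpSet (fun x : EuclideanSpace ℝ σ => ‖x‖) μ = Set.univ)

/-- Real polynomials, as elements of the Sobolev space of a measure with exponential moments. -/
noncomputable def polynomialToSobolev : MvPolynomial σ ℝ →ₗ[ℝ] sobolevSpace hμ :=
  (evalEuclidean σ).toLinearMap.codRestrict (sobolevSpace hμ) fun p =>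
    (memW12Lip_iff hμ).2 ⟨locallyLipschitz_evalEuclidean p, memLp_evalEuclidean hexp p 2,
      memLp_gradient_evalEuclidean hexp p⟩

lemma sobolevToLp_polynomialToSobolev_dense :
    ⊤ ≤ (⨆ m, ((restrictTotalDegree σ ℝ m).map (polynomialToSobolev hμ hexp)).map
      (sobolevToLp hμ)).topologicalClosure := by
  rw [top_le_iff, Submodule.topologicalClosure_eq_top_iff, Submodule.eq_bot_iff]
  intro g hg
  have hzero (p : MvPolynomial σ ℝ) : ∫ x, g x * evalEuclidean σ p x ∂μ = 0 := by
    have hmem : sobolevToLp hμ (polynomialToSobolev hμ hexp p) ∈ ⨆ m,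
        ((restrictTotalDegree σ ℝ m).map (polynomialToSobolev hμ hexp)).map (sobolevToLp hμ) :=
      Submodule.mem_iSup_of_mem p.totalDegree <| Submodule.mem_map_of_mem <|
        Submodule.mem_map_of_mem <| (mem_restrictTotalDegree σ _ p).2 le_rfl
    have hinner := inner_toLp_toLp (memLp_evalEuclidean hexp p 2) (Lp.memLp g)
    rw [Lp.toLp_coeFn] at hinner
    exact hinner.symm.trans ((Submodule.mem_orthogonal _ g).1 hg _ hmem)
  exact Lp.ext <| (ae_eq_zero_of_integral_mul_evalEuclidean_eq_zero hexp (Lp.memLp g) hzero).trans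
    (Lp.coeFn_zero ℝ 2 μ).symm

end PolynomialSobolev

section GaussianSpectralGap

open MvPolynomial

variable {n : ℕ}

/-- The metric Sobolev space of the standard Gaussian measure. -/
noncomputable abbrev gaussianSobolevSpace (n : ℕ) : Submodule ℝ (EuclideanSpace ℝ (Fin n) → ℝ) :=
  sobolevSpace (stdGaussian_absolutelyContinuous (n := n))

/-- Polynomials of total degree at most `m` in the Gaussian Sobolev space: the span of the
eigenfunctions of the Ornstein–Uhlenbeck operator with eigenvalue at most `m`. -/
noncomputable def gaussianPolynomials (n m : ℕ) : Submodule ℝ (gaussianSobolevSpace n) :=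
  (restrictTotalDegree (Fin n) ℝ m).map
    (polynomialToSobolev stdGaussian_absolutelyContinuous integrableExpSet_norm_stdGaussian)

lemma memLp_evalEuclidean_stdGaussian (p : MvPolynomial (Fin n) ℝ) :
    MemLp (evalEuclidean (Fin n) p) 2 (stdGaussian n) :=
  memLp_evalEuclidean integrableExpSet_norm_stdGaussian p 2

lemma integrable_gradient_apply_mul_evalEuclidean (f : gaussianSobolevSpace n)
    (q : MvPolynomial (Fin n) ℝ) (i : Fin n) :
    Integrable (fun x => ∇ f.1 x i * evalEuclidean (Fin n) q x) (stdGaussian n) :=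
  ((sobolevSpace.memLp_gradient f).eval_piLp i).integrable_mul (memLp_evalEuclidean_stdGaussian q)

lemma integrable_mul_evalEuclidean (f : gaussianSobolevSpace n) (q : MvPolynomial (Fin n) ℝ) :
    Integrable (fun x => f.1 x * evalEuclidean (Fin n) q x) (stdGaussian n) :=
  (sobolevSpace.memLp f).integrable_mul (memLp_evalEuclidean_stdGaussian q)

lemma integral_gradient_apply_mul_evalEuclidean (f : gaussianSobolevSpace n)
    (q : MvPolynomial (Fin n) ℝ) (i : Fin n) :
    ∫ x, ∇ f.1 x i * evalEuclidean (Fin n) q x ∂stdGaussian n =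
      ∫ x, f.1 x * evalEuclidean (Fin n) (X i * q - pderiv i q) x ∂stdGaussian n := by
  have hadjoint (x) : ⟪x, EuclideanSpace.single i 1⟫ * evalEuclidean (Fin n) q x -
      fderiv ℝ (evalEuclidean (Fin n) q) x (EuclideanSpace.single i 1) =
        evalEuclidean (Fin n) (X i * q - pderiv i q) x := by
    simp [fderiv_evalEuclidean_single, evalEuclidean_X, EuclideanSpace.inner_single_right]
  have hibp := integral_fderiv_mul_stdGaussian (sobolevSpace.locallyLipschitz f)
    (contDiff_evalEuclidean q) (v := EuclideanSpace.single i 1)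
  simp_rw [hadjoint, ← gradient_apply] at hibp
  exact hibp (integrable_gradient_apply_mul_evalEuclidean f q i)
    (integrable_mul_evalEuclidean f _) (integrable_mul_evalEuclidean f q)

lemma inner_sobolevGradient_polynomialToSobolev (f : gaussianSobolevSpace n)
    (p : MvPolynomial (Fin n) ℝ) :
    ⟪sobolevGradient stdGaussian_absolutelyContinuous f,
      sobolevGradient stdGaussian_absolutelyContinuous
        (polynomialToSobolev _ integrableExpSet_norm_stdGaussian p)⟫ =
    ⟪sobolevToLp stdGaussian_absolutelyContinuous f,
      sobolevToLp stdGaussian_absolutelyContinuous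
        (polynomialToSobolev _ integrableExpSet_norm_stdGaussian
          (ornsteinUhlenbeck (Fin n) ℝ p))⟫ := by
  rw [inner_sobolevGradient, inner_sobolevToLp]
  calc
    ∫ x, ⟪∇ f.1 x, ∇ (evalEuclidean (Fin n) p) x⟫ ∂stdGaussian n
    _ = ∫ x, ∑ i, ∇ f.1 x i * evalEuclidean (Fin n) (pderiv i p) x ∂stdGaussian n := by
      simp only [PiLp.inner_apply, gradient_evalEuclidean_apply, RCLike.inner_apply', conj_trivial]
    _ = ∑ i, ∫ x, ∇ f.1 x i * evalEuclidean (Fin n) (pderiv i p) x ∂stdGaussian n :=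
      integral_finsetSum _ fun i _ => integrable_gradient_apply_mul_evalEuclidean f _ i
    _ = ∑ i, ∫ x, f.1 x * evalEuclidean (Fin n) (X i * pderiv i p - pderiv i (pderiv i p)) x
          ∂stdGaussian n := by
      simp only [integral_gradient_apply_mul_evalEuclidean]
    _ = ∫ x, f.1 x * evalEuclidean (Fin n) (ornsteinUhlenbeck (Fin n) ℝ p) x ∂stdGaussian n := by
      rw [← integral_finsetSum _ fun i _ => integrable_mul_evalEuclidean f _]
      simp only [ornsteinUhlenbeck_apply, map_sum, Finset.sum_apply, Finset.mul_sum]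

lemma isTriangularFiltration_gaussianPolynomials :
    IsTriangularFiltration (sobolevToLp stdGaussian_absolutelyContinuous)
      (sobolevGradient stdGaussian_absolutelyContinuous) (gaussianPolynomials n) where
  monotone _ _ hle := Submodule.map_mono (monotone_restrictTotalDegree hle)
  finiteDimensional m := by unfold gaussianPolynomials; infer_instance
  exists_inner_eq m := by
    rintro _ ⟨p, hp, rfl⟩
    refine ⟨_, Submodule.mem_map_of_mem (ornsteinUhlenbeck_sub_smul_mem hp), fun f => ?_⟩
    rw [inner_sobolevGradient_polynomialToSobolev, ← map_smul, ← map_smul, ← map_add, ← map_add,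
      add_sub_cancel]

lemma finrank_map_gaussianPolynomials_le (m : ℕ) :
    Module.finrank ℝ ((gaussianPolynomials n m).map
      (sobolevToLp stdGaussian_absolutelyContinuous)) ≤ (n + m).choose m := by
  rw [gaussianPolynomials, ← Submodule.map_comp]
  refine (Submodule.finrank_map_le _ _).trans_eq ?_
  rw [finrank_restrictTotalDegree, Fintype.card_fin]

theorem gaussian_spectral_gap {m : ℕ} {f : gaussianSobolevSpace n}
    (horth : sobolevToLp stdGaussian_absolutelyContinuous f ∈
      ((gaussianPolynomials n m).map (sobolevToLp stdGaussian_absolutelyContinuous))ᗮ) :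
    ((m : ℝ) + 1) * ∫ x, f.1 x ^ 2 ∂stdGaussian n ≤ ∫ x, localLip f.1 x ^ 2 ∂stdGaussian n := by
  rw [← norm_sobolevToLp_sq, ← norm_sobolevGradient_sq]
  exact isTriangularFiltration_gaussianPolynomials.mul_norm_sq_le
    (sobolevToLp_polynomialToSobolev_dense _ _) horth

end GaussianSpectralGap

section MinMax

/-- The set of Rayleigh quotients whose supremum over `F` enters the definition of `lambdaLip`. -/
def rayleighQuotients {Ω : Type*} [PseudoMetricSpace Ω] [MeasurableSpace Ω] (μ : Measure Ω)
    (F : Submodule ℝ (Ω → ℝ)) : Set ℝ :=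
  {r | ∃ f ∈ F, ∫ x, f x ^ 2 ∂μ ≠ 0 ∧ r = (∫ x, localLip f x ^ 2 ∂μ) / ∫ x, f x ^ 2 ∂μ}

section MetricMeasureSpace

variable {Ω : Type*} [PseudoMetricSpace Ω] [MeasurableSpace Ω] {μ : Measure Ω}

lemma sSup_rayleighQuotients_nonneg (F : Submodule ℝ (Ω → ℝ)) :
    0 ≤ sSup (rayleighQuotients μ F) := by
  refine Real.sSup_nonneg ?_
  rintro _ ⟨f, -, -, rfl⟩
  positivity

lemma le_lambdaLip {k : ℕ} {a : ℝ}
    (hexists : ∃ F : Submodule ℝ (Ω → ℝ), Module.finrank ℝ F = k ∧ ∀ f ∈ F, memW12Lip μ f)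
    (hle : ∀ F : Submodule ℝ (Ω → ℝ), Module.finrank ℝ F = k → (∀ f ∈ F, memW12Lip μ f) →
      a ≤ sSup (rayleighQuotients μ F)) : a ≤ lambdaLip μ k := by
  obtain ⟨F₀, hF₀, hF₀mem⟩ := hexists
  refine le_csInf ⟨_, F₀, hF₀, hF₀mem, rfl⟩ ?_
  rintro _ ⟨F, hF, hFmem, rfl⟩
  exact hle F hF hFmem

end MetricMeasureSpace

lemma bddAbove_rayleighQuotients {E : Type*} [NormedAddCommGroup E] [InnerProductSpace ℝ E]
    [FiniteDimensional ℝ E] [MeasurableSpace E] [BorelSpace E] {μ : Measure E}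
    [μ.IsOpenPosMeasure] (hμ : μ ≪ volume) {F : Submodule ℝ (E → ℝ)} [FiniteDimensional ℝ F]
    (hF : F ≤ sobolevSpace hμ) : BddAbove (rayleighQuotients μ F) := by
  obtain ⟨C, hC⟩ := exists_norm_le_mul_norm_of_injective
    (J := sobolevToLp hμ ∘ₗ Submodule.inclusion hF)
    ((injective_sobolevToLp hμ).comp (Submodule.inclusion_injective hF))
    (sobolevGradient hμ ∘ₗ Submodule.inclusion hF)
  refine ⟨C ^ 2, ?_⟩
  rintro _ ⟨f, hf, -, rfl⟩
  refine div_le_of_le_mul₀ (by positivity) (by positivity) ?_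
  rw [← norm_sobolevGradient_sq hμ ⟨f, hF hf⟩, ← norm_sobolevToLp_sq hμ ⟨f, hF hf⟩, ← mul_pow]
  exact pow_le_pow_left₀ (norm_nonneg _) (hC ⟨f, hf⟩) 2

variable {n k m : ℕ}

lemma exists_finrank_eq_and_le_gaussianSobolevSpace (hn : n ≠ 0) (k : ℕ) :
    ∃ F : Submodule ℝ (EuclideanSpace ℝ (Fin n) → ℝ),
      Module.finrank ℝ F = k ∧ F ≤ gaussianSobolevSpace n := by
  have : NeZero n := ⟨hn⟩
  have hrank : (k : Cardinal) ≤ Module.rank ℝ (MvPolynomial (Fin n) ℝ) := by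
    rw [← (MvPolynomial.basisMonomials (Fin n) ℝ).mk_eq_rank'']
    exact Cardinal.natCast_le_aleph0.trans (Cardinal.aleph0_le_mk _)
  obtain ⟨s, hsk, hs⟩ := le_rank_iff_exists_linearIndependent_finset.1 hrank
  refine ⟨(Submodule.span ℝ (s : Set (MvPolynomial (Fin n) ℝ))).map
    (evalEuclidean (Fin n)).toLinearMap, ?_, ?_⟩
  · rw [← (Submodule.equivMapOfInjective _ injective_evalEuclidean _).finrank_eq,
      finrank_span_finset_eq_card hs, hsk]
  · rintro _ ⟨p, -, rfl⟩
    exact (polynomialToSobolev stdGaussian_absolutelyContinuous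
      integrableExpSet_norm_stdGaussian p).2

lemma add_one_le_sSup_rayleighQuotients {F : Submodule ℝ (EuclideanSpace ℝ (Fin n) → ℝ)}
    (hF : F ≤ gaussianSobolevSpace n) (hlt : (n + m).choose m < Module.finrank ℝ F) :
    (m : ℝ) + 1 ≤ sSup (rayleighQuotients (stdGaussian n) F) := by
  have : FiniteDimensional ℝ F := .of_finrank_pos (Nat.zero_lt_of_lt hlt)
  have := (isTriangularFiltration_gaussianPolynomials (n := n)).finiteDimensional m
  obtain ⟨f, hf0, horth⟩ := exists_ne_zero_mem_orthogonal_of_finrank_lt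
    (sobolevToLp _ ∘ₗ Submodule.inclusion hF)
    ((gaussianPolynomials n m).map (sobolevToLp stdGaussian_absolutelyContinuous))
    ((finrank_map_gaussianPolynomials_le m).trans_lt hlt)
  have hf : sobolevToLp _ (Submodule.inclusion hF f) ≠ 0 :=
    (map_ne_zero_iff _ (injective_sobolevToLp stdGaussian_absolutelyContinuous)).2 <|
      (map_ne_zero_iff _ (Submodule.inclusion_injective hF)).2 hf0
  have hpos : 0 < ∫ x, f.1 x ^ 2 ∂stdGaussian n :=
    (sq_pos_of_pos (norm_pos_iff.2 hf)).trans_eq (norm_sobolevToLp_sq _ _)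
  exact ((le_div_iff₀ hpos).2 (gaussian_spectral_gap horth)).trans <|
    le_csSup (bddAbove_rayleighQuotients _ hF) ⟨f, f.2, hpos.ne', rfl⟩

theorem natCast_le_lambdaLip_stdGaussian (hn : n ≠ 0)
    (hlt : ∀ j < m, (n + j).choose j < k) : (m : ℝ) ≤ lambdaLip (stdGaussian n) k := by
  refine le_lambdaLip (exists_finrank_eq_and_le_gaussianSobolevSpace hn k) fun F hFk hF => ?_
  cases m with
  | zero => simpa using sSup_rayleighQuotients_nonneg F
  | succ j =>
    push_cast
    exact add_one_le_sSup_rayleighQuotients hF (hFk ▸ hlt j j.lt_succ_self)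

end MinMax

section BinomialEstimates

variable {n k m : ℕ}

lemma choose_add_le_exp_mul_div_pow (hn : n ≠ 0) :
    ((n + m).choose m : ℝ) ≤ (Real.exp 1 * (n + m) / n) ^ n := by
  have hfactorial : ((n : ℝ) ^ n) / n.factorial ≤ Real.exp 1 ^ n := by
    simpa only [← Real.exp_nat_mul, mul_one] using
      Real.pow_div_factorial_le_exp (n : ℝ) n.cast_nonneg n
  calc
    ((n + m).choose m : ℝ)
    _ = (n + m).choose n := by rw [Nat.choose_symm_add]
    _ ≤ (n + m : ℝ) ^ n / n.factorial := mod_cast Nat.choose_le_pow_div (α := ℝ) n (n + m)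
    _ = (n : ℝ) ^ n / n.factorial * ((n + m) / n) ^ n := by
      rw [div_pow]
      field_simp
    _ ≤ Real.exp 1 ^ n * ((n + m) / n) ^ n := by gcongr
    _ = (Real.exp 1 * (n + m) / n) ^ n := by rw [← mul_pow, mul_div_assoc]

lemma div_exp_mul_rpow_sub_le_of_le_choose (hn : n ≠ 0) (hk : k ≤ (n + m).choose m) :
    (n / Real.exp 1) * (k : ℝ) ^ ((1 : ℝ) / n) - n ≤ m := by
  have hroot : (k : ℝ) ^ ((1 : ℝ) / n) ≤ Real.exp 1 * (n + m) / n := by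
    rw [one_div, Real.rpow_inv_le_iff_of_pos k.cast_nonneg (by positivity) (by positivity),
      Real.rpow_natCast]
    exact (Nat.cast_le.2 hk).trans (choose_add_le_exp_mul_div_pow hn)
  calc
    (n / Real.exp 1) * (k : ℝ) ^ ((1 : ℝ) / n) - n
    _ ≤ (n / Real.exp 1) * (Real.exp 1 * (n + m) / n) - n := by gcongr
    _ = m := by field_simp; ring

lemma log_div_log_le_of_le_choose (hk₀ : k ≠ 0) (hk : k ≤ (n + m).choose m) :
    Real.log k / Real.log ((n + 1) * Real.exp 1) ≤ m := by
  have hbase : (n : ℝ) + 1 ≤ (n + 1) * Real.exp 1 :=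
    le_mul_of_one_le_right (by positivity) (Real.one_le_exp zero_le_one)
  have hbase_gt : 1 < ((n : ℝ) + 1) * Real.exp 1 :=
    one_lt_mul_of_le_of_lt (by simp) (Real.one_lt_exp_iff.2 one_pos)
  have hpow : (k : ℝ) ≤ (n + 1) ^ m := mod_cast hk.trans (Nat.choose_add_le_add_one_pow n m)
  rw [div_le_iff₀ (Real.log_pos hbase_gt), ← Real.log_pow]
  exact Real.log_le_log (by positivity) (hpow.trans (by gcongr))

lemma exists_le_choose_add (hn : n ≠ 0) (k : ℕ) : ∃ m, k ≤ (n + m).choose m :=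
  ⟨k, calc
    k ≤ (1 + k).choose k := by rw [← Nat.choose_symm_add, Nat.choose_one_right]; omega
    _ ≤ (n + k).choose k := Nat.choose_le_choose k (by omega)⟩

end BinomialEstimates

end GaussianEigenvalue

/-- **Lower bound for the Gaussian eigenvalues:**
`λ_k^Lip(ℝⁿ,|·|,γⁿ) ≥ max( (n/e)·k^{1/n} - n , log k / log((n+1)e) )` for `k ≥ 1`. -/
theorem gaussian_eigenvalue_lower_bound
    (n : ℕ) (hn : 1 ≤ n) (k : ℕ) (hk : 1 ≤ k) :
    max ((n / Real.exp 1) * (k : ℝ) ^ ((1 : ℝ) / n) - n)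
        (Real.log k / Real.log ((n + 1) * Real.exp 1)) ≤
      lambdaLip (stdGaussian n) k := by
  have hn₀ : n ≠ 0 := Nat.one_le_iff_ne_zero.1 hn
  have hexists := GaussianEigenvalue.exists_le_choose_add hn₀ k
  have hle : k ≤ (n + Nat.find hexists).choose (Nat.find hexists) := Nat.find_spec hexists
  calc
    max ((n / Real.exp 1) * (k : ℝ) ^ ((1 : ℝ) / n) - n)
        (Real.log k / Real.log ((n + 1) * Real.exp 1))
    _ ≤ (Nat.find hexists : ℝ) :=
      max_le (GaussianEigenvalue.div_exp_mul_rpow_sub_le_of_le_choose hn₀ hle)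
        (GaussianEigenvalue.log_div_log_le_of_le_choose (Nat.one_le_iff_ne_zero.1 hk) hle)
    _ ≤ lambdaLip (stdGaussian n) k :=
      GaussianEigenvalue.natCast_le_lambdaLip_stdGaussian hn₀ fun j hj =>
        not_le.1 (Nat.find_min hexists hj)
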